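/- For all quadruples A = (L_1,L_2,L_3,L_4) and A' = (L'_1,L'_2,L'_3,L'_4) encoding (4,1) valise adinkras, the symmetrized gadget SG(A,A') lies in the set {0, 16, −16, 32, −32}. -/

import Mathlib

open Matrix

/-- A signed permutation matrix: exactly one nonzero entry in each row and column,
that entry being `1` or `-1`. -/
def IsSignedPerm {n : ℕ} (M : Matrix (Fin n) (Fin n) ℤ) : Prop :=
  (∀ i j, M i j = 0 ∨ M i j = 1 ∨ M i j = -1) ∧
  (∀ i, ∃! j, M i j ≠ 0) ∧
  (∀ j, ∃! i, M i j ≠ 0)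

/-- The garden algebra relations for a family of `d × d` integer matrices. -/
def GardenRel {d N : ℕ} (L : Fin N → Matrix (Fin d) (Fin d) ℤ) : Prop :=
  ∀ I J : Fin N,
    (L I * (L J)ᵀ + L J * (L I)ᵀ =
      if I = J then (2 : ℤ) • (1 : Matrix (Fin d) (Fin d) ℤ) else 0) ∧
    ((L I)ᵀ * L J + (L J)ᵀ * L I =
      if I = J then (2 : ℤ) • (1 : Matrix (Fin d) (Fin d) ℤ) else 0)

/-- The L-matrices of a (4,1) valise adinkra: a quadruple of 4×4 integer signed
permutation matrices satisfying the garden algebra relations. -/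
def IsAdinkra (L : Fin 4 → Matrix (Fin 4) (Fin 4) ℤ) : Prop :=
  (∀ I, IsSignedPerm (L I)) ∧ GardenRel L

/-- The symmetrized gadget `SG(A,A') = Σ trace(L_{I₁}ᵀ·L_{J₁}·L'_{I₂}ᵀ·L'_{J₂})`,
summed over all pairs `I₁ < J₁` and `I₂ < J₂` in `{1,2,3,4}`. -/
def SG (L L' : Fin 4 → Matrix (Fin 4) (Fin 4) ℤ) : ℤ :=
  ∑ I₁ : Fin 4, ∑ J₁ : Fin 4, ∑ I₂ : Fin 4, ∑ J₂ : Fin 4,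
    if I₁ < J₁ ∧ I₂ < J₂ then
      Matrix.trace ((L I₁)ᵀ * L J₁ * (L' I₂)ᵀ * L' J₂)
    else 0

/-!
Write `Λ_ε(u)` for the skew-symmetric `4 × 4` matrix with first row `(0, u)` that is self-dual or
anti-self-dual according to the sign `ε`. These matrices multiply like imaginary quaternions, and
those of opposite sign commute. Over a domain in which `2 ≠ 0`, a skew-symmetric matrix squaring to
`-1` is some `Λ_ε(u)` with `|u| = 1`.

The matrices `X_i = L_0ᵀ L_i`, `i = 1, 2, 3`, are skew-symmetric, square to `-1` and anticommute, so
they share one `ε` and their vectors are orthonormal. Hence `X_1 X_2 = ±X_3`, and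
`∑_{I<J} L_Iᵀ L_J = X_1 + X_2 + X_3 - X_1 X_2 - X_1 X_3 - X_2 X_3` collapses to `2 X_2` or
`2 (X_1 + X_3)`, that is, to `2 Λ_ε(q)` with `|q|² = 1` or `2`. The symmetrized gadget is the trace
of the product of two such sums: `0` if the signs differ and `-16 (q ⬝ r)` otherwise, where `q ⬝ r`
is an integer with `|q ⬝ r| ≤ 2` by Cauchy–Schwarz.
-/

section DualMatrix

variable {R : Type*} [CommRing R]

/-- The skew-symmetric `4 × 4` matrix with first row `(0, u 0, u 1, u 2)` that is self-dual for
`ε = 1` and anti-self-dual for `ε = -1`. -/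
def dualMatrix (ε : ℤˣ) : (Fin 3 → R) →ₗ[R] Matrix (Fin 4) (Fin 4) R where
  toFun u :=
    !![0, u 0, u 1, u 2;
      -u 0, 0, ε • u 2, -(ε • u 1);
      -u 1, -(ε • u 2), 0, ε • u 0;
      -u 2, ε • u 1, -(ε • u 0), 0]
  map_add' u v := by simp [add_comm]
  map_smul' a u := by simp [mul_smul_comm]

theorem dualMatrix_mul_dualMatrix (ε : ℤˣ) (u v : Fin 3 → R) :
    dualMatrix ε u * dualMatrix ε v = -(u ⬝ᵥ v) • 1 - ε • dualMatrix ε (u ⨯₃ v) := by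
  have one_eq : (1 : Matrix (Fin 4) (Fin 4) R) =
      !![1, 0, 0, 0; 0, 1, 0, 0; 0, 0, 1, 0; 0, 0, 0, 1] := by
    ext i j
    fin_cases i <;> fin_cases j <;> rfl
  obtain rfl | rfl := Int.units_eq_one_or ε <;>
    simp [one_eq, dualMatrix, cross_apply, vec3_dotProduct, vecHead, vecTail] <;>
    grind (splits := 20)

theorem dualMatrix_commute {ε δ : ℤˣ} (h : ε ≠ δ) (u v : Fin 3 → R) :
    Commute (dualMatrix ε u) (dualMatrix δ v) := by
  obtain rfl := Int.units_ne_iff_eq_neg.mp h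
  obtain rfl | rfl := Int.units_eq_one_or δ <;>
    simp [commute_iff_eq, dualMatrix, vecHead, vecTail] <;> grind (splits := 20)

theorem trace_dualMatrix_mul_dualMatrix (ε δ : ℤˣ) (u v : Fin 3 → R) :
    trace (dualMatrix ε u * dualMatrix δ v) = if ε = δ then -4 * (u ⬝ᵥ v) else 0 := by
  obtain rfl | rfl := Int.units_eq_one_or ε <;> obtain rfl | rfl := Int.units_eq_one_or δ <;>
    simp [dualMatrix, trace, vec3_dotProduct, Fin.sum_univ_four] <;> ring

theorem dualMatrix_mul_self (ε : ℤˣ) (u : Fin 3 → R) :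
    dualMatrix ε u * dualMatrix ε u = -(u ⬝ᵥ u) • 1 := by
  rw [dualMatrix_mul_dualMatrix, cross_self, map_zero, smul_zero, sub_zero]

theorem dualMatrix_zero_succ (ε : ℤˣ) (u : Fin 3 → R) (i : Fin 3) :
    dualMatrix ε u 0 i.succ = u i := by
  fin_cases i <;> rfl

theorem dualMatrix_injective (ε : ℤˣ) :
    Function.Injective (dualMatrix ε : (Fin 3 → R) → Matrix (Fin 4) (Fin 4) R) := by
  intro u v h
  ext i
  rw [← dualMatrix_zero_succ ε u, h, dualMatrix_zero_succ]

theorem eq_zero_of_dualMatrix_mul_eq_zero [NoZeroDivisors R] {ε δ : ℤˣ} {u v : Fin 3 → R}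
    (h : dualMatrix ε u * dualMatrix δ v = 0) (hv : v ⬝ᵥ v ≠ 0) : u = 0 := by
  have hsmul : (v ⬝ᵥ v) • dualMatrix ε u = 0 := by
    simpa [mul_assoc, dualMatrix_mul_self] using congrArg (· * dualMatrix δ v) h
  rw [smul_eq_zero_iff_right hv, ← map_zero (dualMatrix ε)] at hsmul
  exact dualMatrix_injective ε hsmul

theorem exists_two_smul_eq_dualMatrix_add_dualMatrix {M : Matrix (Fin 4) (Fin 4) R}
    (hskew : Mᵀ = -M) : ∃ p q, (2 : R) • M = dualMatrix 1 p + dualMatrix (-1) q := by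
  have skew (i j : Fin 4) : M j i = -M i j := congrFun₂ hskew i j
  refine ⟨![M 0 1 + M 2 3, M 0 2 - M 1 3, M 0 3 + M 1 2],
    ![M 0 1 - M 2 3, M 0 2 + M 1 3, M 0 3 - M 1 2], ?_⟩
  ext i j
  fin_cases i <;> fin_cases j <;> simp [dualMatrix] <;> grind

theorem exists_two_smul_eq_dualMatrix [IsDomain R] (h2 : (2 : R) ≠ 0) {M : Matrix (Fin 4) (Fin 4) R}
    (hskew : Mᵀ = -M) (hsq : M * M = -1) : ∃ ε u, (2 : R) • M = dualMatrix ε u := by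
  have h4 : (4 : R) ≠ 0 := by simpa [show (4 : R) = 2 * 2 by norm_num] using h2
  obtain ⟨p, q, hM⟩ := exists_two_smul_eq_dualMatrix_add_dualMatrix hskew
  have hsq' : (p ⬝ᵥ p + q ⬝ᵥ q - 4) • (1 : Matrix (Fin 4) (Fin 4) R) =
      (2 : R) • (dualMatrix 1 p * dualMatrix (-1) q) := by
    have h : (dualMatrix 1 p + dualMatrix (-1) q) * (dualMatrix 1 p + dualMatrix (-1) q) =
        (-4 : R) • 1 := by
      rw [← hM, smul_mul_smul_comm, hsq, smul_neg, neg_smul]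
      norm_num
    rw [add_mul, mul_add, mul_add, (dualMatrix_commute (by decide) q p).eq, dualMatrix_mul_self,
      dualMatrix_mul_self] at h
    linear_combination (norm := module) -h
  have hnorm : p ⬝ᵥ p + q ⬝ᵥ q = 4 := by
    have h := congrArg trace hsq'
    have h' : p ⬝ᵥ p + q ⬝ᵥ q - 4 = 0 := by
      simpa [trace_dualMatrix_mul_dualMatrix, h4] using h
    exact sub_eq_zero.mp h'
  have hmul : dualMatrix 1 p * dualMatrix (-1) q = 0 := by
    rwa [hnorm, sub_self, zero_smul, eq_comm, smul_eq_zero_iff_right h2] at hsq'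
  by_cases hq : q ⬝ᵥ q = 0
  · have hp : p ⬝ᵥ p ≠ 0 := by rwa [← hnorm, hq, add_zero] at h4
    rw [(dualMatrix_commute (by decide) p q).eq] at hmul
    exact ⟨1, p, by simp [hM, eq_zero_of_dualMatrix_mul_eq_zero hmul hp]⟩
  · exact ⟨-1, q, by simp [hM, eq_zero_of_dualMatrix_mul_eq_zero hmul hq]⟩

theorem exists_eq_dualMatrix [IsDomain R] (h2 : (2 : R) ≠ 0) {M : Matrix (Fin 4) (Fin 4) R}
    (hskew : Mᵀ = -M) (hsq : M * M = -1) : ∃ ε u, u ⬝ᵥ u = 1 ∧ M = dualMatrix ε u := by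
  obtain ⟨ε, p, hp⟩ := exists_two_smul_eq_dualMatrix h2 hskew hsq
  obtain ⟨u, rfl⟩ : ∃ u, p = (2 : R) • u :=
    ⟨fun i ↦ M 0 i.succ, by ext i; simpa [dualMatrix_zero_succ] using congrFun₂ hp.symm 0 i.succ⟩
  have hM : M = dualMatrix ε u := by
    rw [map_smul] at hp
    exact smul_right_injective _ h2 hp
  refine ⟨ε, u, ?_, hM⟩
  rw [hM, dualMatrix_mul_self] at hsq
  simpa using congrFun₂ hsq 0 0

theorem cross_eq_or_eq_neg [IsDomain R] {u v w : Fin 3 → R} (hu : u ⬝ᵥ u = 1) (hv : v ⬝ᵥ v = 1)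
    (hw : w ⬝ᵥ w = 1) (huv : u ⬝ᵥ v = 0) (huw : u ⬝ᵥ w = 0) (hvw : v ⬝ᵥ w = 0) :
    u ⨯₃ v = w ∨ u ⨯₃ v = -w := by
  have parallel : u ⨯₃ v = (w ⬝ᵥ u ⨯₃ v) • w := by
    have h := cross_cross_eq_smul_sub_smul' w (u ⨯₃ v) w
    rw [cross_cross_eq_smul_sub_smul, huw, hvw, hw, dotProduct_comm _ w] at h
    simpa [sub_eq_zero] using h.symm
  have sq_eq_one : (w ⬝ᵥ u ⨯₃ v) * (w ⬝ᵥ u ⨯₃ v) = 1 := by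
    have h := cross_dot_cross u v u v
    rw [parallel] at h
    simpa [hu, hv, hw, huv] using h
  rcases mul_self_eq_one_iff.mp sq_eq_one with h | h <;> rw [parallel, h]
  exacts [.inl (one_smul R w), .inr (neg_one_smul R w)]

/-- A family of skew-symmetric matrices that square to `-1` and anticommute pairwise. Such families
are the images of the generators of a Clifford algebra under its orthogonal representations. -/
structure IsSkewCliffordFamily {ι n : Type*} [Fintype n] [DecidableEq n]
    (X : ι → Matrix n n R) : Prop where
  transpose_eq : ∀ i, (X i)ᵀ = -X i
  mul_self : ∀ i, X i * X i = -1
  anticomm : ∀ ⦃i j⦄, i ≠ j → X i * X j + X j * X i = 0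

theorem IsSkewCliffordFamily.exists_forall_eq_dualMatrix {ι : Type*} [Nonempty ι] [IsDomain R]
    (h2 : (2 : R) ≠ 0) {X : ι → Matrix (Fin 4) (Fin 4) R} (hX : IsSkewCliffordFamily X) :
    ∃ ε, ∃ u : ι → Fin 3 → R, (∀ i, u i ⬝ᵥ u i = 1) ∧ (∀ ⦃i j⦄, i ≠ j → u i ⬝ᵥ u j = 0) ∧
      ∀ i, X i = dualMatrix ε (u i) := by
  choose ε u hu hXu using fun i ↦
    exists_eq_dualMatrix h2 (hX.transpose_eq i) (hX.mul_self i)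
  have sign_eq (i j : ι) : ε i = ε j := by
    by_contra hne
    have anti := hX.anticomm (ne_of_apply_ne ε hne)
    rw [hXu i, hXu j, ← (dualMatrix_commute hne _ _).eq, ← two_smul R, smul_eq_zero_iff_right h2]
      at anti
    have : u i = 0 := eq_zero_of_dualMatrix_mul_eq_zero anti (by simp [hu])
    simpa [this] using hu i
  obtain ⟨k⟩ := ‹Nonempty ι›
  refine ⟨ε k, u, hu, fun i j hij ↦ ?_, fun i ↦ sign_eq i k ▸ hXu i⟩
  have anti := hX.anticomm hij
  rw [hXu i, hXu j, sign_eq i j, dualMatrix_mul_dualMatrix, dualMatrix_mul_dualMatrix,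
    ← cross_anticomm (u i), dotProduct_comm (u j)] at anti
  have : (2 : R) • -(u i ⬝ᵥ u j) • (1 : Matrix (Fin 4) (Fin 4) R) = 0 := by
    rw [← anti, two_smul, map_neg, smul_neg]
    abel
  simpa [h2] using this

theorem sum_sub_mul_eq_of_mul_eq {A : Type*} [Ring A] {x y z : A} (hx : x * x = -1)
    (hy : y * y = -1) (hxy : x * y + y * x = 0) (h : x * y = z) :
    x + y + z - (x * y + x * z + y * z) = 2 • y := by
  have hxz : x * z = -y := by rw [← h, ← mul_assoc, hx, neg_one_mul]
  have hyz : y * z = x := by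
    rw [← h, eq_neg_of_add_eq_zero_left hxy, mul_neg, ← mul_assoc, hy, neg_one_mul, neg_neg]
  rw [h, hxz, hyz]
  abel

theorem sum_sub_mul_eq_of_mul_eq_neg {A : Type*} [Ring A] {x y z : A} (hx : x * x = -1)
    (hy : y * y = -1) (hxy : x * y + y * x = 0) (h : x * y = -z) :
    x + y + z - (x * y + x * z + y * z) = 2 • (x + z) := by
  obtain rfl : z = -(x * y) := by rw [h, neg_neg]
  have hxz : x * -(x * y) = y := by rw [mul_neg, ← mul_assoc, hx, neg_one_mul, neg_neg]
  have hyz : y * -(x * y) = -x := by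
    rw [eq_neg_of_add_eq_zero_left hxy, neg_neg, ← mul_assoc, hy, neg_one_mul]
  rw [hxz, hyz]
  abel

theorem IsSkewCliffordFamily.mul_eq_or_mul_eq_neg [IsDomain R] (h2 : (2 : R) ≠ 0)
    {X : Fin 3 → Matrix (Fin 4) (Fin 4) R} (hX : IsSkewCliffordFamily X) :
    X 0 * X 1 = X 2 ∨ X 0 * X 1 = -X 2 := by
  obtain ⟨ε, u, hnorm, horth, hXu⟩ := hX.exists_forall_eq_dualMatrix h2
  have hprod : X 0 * X 1 = -(ε • dualMatrix ε (u 0 ⨯₃ u 1)) := by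
    rw [hXu, hXu, dualMatrix_mul_dualMatrix, horth (by decide), neg_zero, zero_smul, zero_sub]
  have hcross : u 0 ⨯₃ u 1 = u 2 ∨ u 0 ⨯₃ u 1 = -u 2 :=
    cross_eq_or_eq_neg (hnorm 0) (hnorm 1) (hnorm 2) (horth (by decide)) (horth (by decide))
      (horth (by decide))
  rw [hprod, hXu 2]
  obtain rfl | rfl := Int.units_eq_one_or ε <;> rcases hcross with h | h <;> simp [h]

theorem IsSkewCliffordFamily.exists_sum_sub_eq [IsDomain R] (h2 : (2 : R) ≠ 0)
    {X : Fin 3 → Matrix (Fin 4) (Fin 4) R} (hX : IsSkewCliffordFamily X) :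
    ∃ ε, ∃ q : Fin 3 → R, (q ⬝ᵥ q = 1 ∨ q ⬝ᵥ q = 2) ∧
      ∑ i, X i - ∑ i, ∑ j ∈ Finset.Ioi i, X i * X j = (2 : R) • dualMatrix ε q := by
  obtain ⟨ε, u, hnorm, horth, hXu⟩ := hX.exists_forall_eq_dualMatrix h2
  have anti : X 0 * X 1 + X 1 * X 0 = 0 := hX.anticomm (by decide)
  have hsum : ∑ i, X i - ∑ i, ∑ j ∈ Finset.Ioi i, X i * X j =
      X 0 + X 1 + X 2 - (X 0 * X 1 + X 0 * X 2 + X 1 * X 2) := by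
    simp [Fin.sum_univ_succ, Fin.sum_Ioi_succ, add_assoc]
  rw [hsum]
  rcases hX.mul_eq_or_mul_eq_neg h2 with h | h
  · refine ⟨ε, u 1, .inl (hnorm 1), ?_⟩
    rw [sum_sub_mul_eq_of_mul_eq (hX.mul_self 0) (hX.mul_self 1) anti h, hXu, two_smul, two_smul]
  · refine ⟨ε, u 0 + u 2, .inr ?_, ?_⟩
    · have h02 : (0 : Fin 3) ≠ 2 := by decide
      simp [hnorm, horth h02, horth h02.symm, one_add_one_eq_two]
    · rw [sum_sub_mul_eq_of_mul_eq_neg (hX.mul_self 0) (hX.mul_self 1) anti h, hXu, hXu, map_add,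
        two_smul, two_smul]

end DualMatrix

section Garden

variable {d N : ℕ}

namespace GardenRel

variable {L : Fin N → Matrix (Fin d) (Fin d) ℤ}

theorem mul_transpose_self (h : GardenRel L) (I : Fin N) : L I * (L I)ᵀ = 1 := by
  have h' := (h I I).1
  rw [if_pos rfl, ← two_smul ℤ] at h'
  exact smul_right_injective _ two_ne_zero h'

theorem transpose_mul_add (h : GardenRel L) {I J : Fin N} (hIJ : I ≠ J) :
    (L I)ᵀ * L J + (L J)ᵀ * L I = 0 := by
  simpa [hIJ] using (h I J).2

theorem transpose_mul_transpose_mul (h : GardenRel L) {I J : Fin N} (hIJ : I ≠ J) (K : Fin N) :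
    (L I)ᵀ * L J * ((L I)ᵀ * L K) = -((L J)ᵀ * L K) := by
  rw [eq_neg_of_add_eq_zero_left (h.transpose_mul_add hIJ), neg_mul, Matrix.mul_assoc,
    ← Matrix.mul_assoc (L I), h.mul_transpose_self, Matrix.one_mul]

theorem isSkewCliffordFamily {L : Fin (N + 1) → Matrix (Fin d) (Fin d) ℤ} (h : GardenRel L) :
    IsSkewCliffordFamily fun i : Fin N ↦ (L 0)ᵀ * L i.succ where
  transpose_eq i := by
    rw [transpose_mul, transpose_transpose]
    exact eq_neg_of_add_eq_zero_left (h.transpose_mul_add i.succ_ne_zero)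
  mul_self i := by
    rw [h.transpose_mul_transpose_mul i.succ_ne_zero.symm,
      mul_eq_one_comm.mp (h.mul_transpose_self i.succ)]
  anticomm i j hij := by
    rw [h.transpose_mul_transpose_mul i.succ_ne_zero.symm,
      h.transpose_mul_transpose_mul j.succ_ne_zero.symm, ← neg_add,
      h.transpose_mul_add (Fin.succ_injective N |>.ne hij), neg_zero]

end GardenRel

/-- The sum of the products `L_Iᵀ L_J` over the pairs `I < J`; the symmetrized gadget is the trace
of the product of two such sums. -/
def pairSum (L : Fin N → Matrix (Fin d) (Fin d) ℤ) : Matrix (Fin d) (Fin d) ℤ :=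
  ∑ I, ∑ J ∈ Finset.Ioi I, (L I)ᵀ * L J

theorem GardenRel.pairSum_eq {L : Fin (N + 1) → Matrix (Fin d) (Fin d) ℤ} (h : GardenRel L) :
    pairSum L = ∑ i : Fin N, (L 0)ᵀ * L i.succ -
      ∑ i : Fin N, ∑ j ∈ Finset.Ioi i, (L 0)ᵀ * L i.succ * ((L 0)ᵀ * L j.succ) := by
  simp only [pairSum, Fin.sum_univ_succ, Fin.sum_Ioi_zero, Fin.sum_Ioi_succ,
    h.transpose_mul_transpose_mul (Fin.succ_ne_zero _).symm, Finset.sum_neg_distrib,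
    sub_neg_eq_add]

end Garden

theorem SG_eq_trace_pairSum_mul_pairSum (L L' : Fin 4 → Matrix (Fin 4) (Fin 4) ℤ) :
    SG L L' = trace (pairSum L * pairSum L') := by
  rw [pairSum]
  simp only [Finset.sum_mul]
  simp only [pairSum, SG, ite_and, Finset.sum_ite_irrel, Finset.sum_const_zero,
    ← Finset.sum_filter, Finset.filter_lt_eq_Ioi, Finset.mul_sum, trace_sum, Matrix.mul_assoc]

theorem sq_dotProduct_le {R ι : Type*} [CommRing R] [LinearOrder R] [IsStrictOrderedRing R]
    [Fintype ι] (u v : ι → R) : (u ⬝ᵥ v) ^ 2 ≤ (u ⬝ᵥ u) * (v ⬝ᵥ v) := by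
  simpa only [dotProduct, sq] using Finset.sum_mul_sq_le_sq_mul_sq Finset.univ u v

theorem stmt18 (L L' : Fin 4 → Matrix (Fin 4) (Fin 4) ℤ)
    (hL : IsAdinkra L) (hL' : IsAdinkra L') :
    SG L L' ∈ ({0, 16, -16, 32, -32} : Set ℤ) := by
  obtain ⟨ε, q, hq, hLq⟩ := hL.2.isSkewCliffordFamily.exists_sum_sub_eq two_ne_zero
  obtain ⟨δ, r, hr, hLr⟩ := hL'.2.isSkewCliffordFamily.exists_sum_sub_eq two_ne_zero
  have hSG : SG L L' = if ε = δ then -16 * (q ⬝ᵥ r) else 0 := by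
    rw [SG_eq_trace_pairSum_mul_pairSum, hL.2.pairSum_eq, hL'.2.pairSum_eq, hLq, hLr,
      smul_mul_smul_comm, trace_smul, trace_dualMatrix_mul_dualMatrix, smul_eq_mul, mul_ite,
      mul_zero, ← mul_assoc]
    norm_num
  have hdot : -2 ≤ q ⬝ᵥ r ∧ q ⬝ᵥ r ≤ 2 := by
    refine abs_le.mp (abs_le_of_sq_le_sq ?_ zero_le_two)
    have := sq_dotProduct_le q r
    rcases hq with hq | hq <;> rcases hr with hr | hr <;> rw [hq, hr] at this <;> linarith
  rw [hSG]
  simp only [Set.mem_insert_iff, Set.mem_singleton_iff]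
  split_ifs <;> omega
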